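/- arXiv:1901.10691 — 5 statements merged into one kernel-verified Lean document; each statement's English description precedes it below -/
import Mathlib

section
/- Let λ be a finite measure on a measurable space, and let μ, ν, μ′ be probability measures with densities p, q, p′ with respect to λ, where p, p′, q are λ-a.e. bounded above and below by positive constants. Let D_JS(μ‖ν) = (1/2) D_KL(μ‖(μ+ν)/2) + (1/2) D_KL(ν‖(μ+ν)/2) denote the Jensen–Shannon divergence. Then the one-sided derivative d/dε D_JS((1−ε)μ + εμ′ ‖ ν)|_{ε=0+} exists and equals ∫ (1/2) log(p/(p+q)) d(μ′ − μ); equivalently, x ↦ (1/2) log(p(x)/(p(x)+q(x))) is an influence function of μ ↦ D_JS(μ‖ν) at μ. -/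
/-!
All measures involved have densities with respect to `lam`, so `D_JS` becomes the integral of
`jsIntegrand a b = (1/2) (a log (a / ((a+b)/2)) + b log (b / ((a+b)/2)))` at the two densities
(`jsDivergence_withDensity`). In its derivative in `a` the rational terms
`1 - a/(a+b) - b/(a+b)` cancel, leaving
`(1/2) log (a / ((a+b)/2))` (`hasDerivAt_jsIntegrand`).

The density `(1-ε) p + ε p'` remains bounded away from zero also for small negative `ε`, so
dominated differentiation under the integral gives a two-sided derivative of the integral at
`ε = 0`, namely `∫ (1/2) log (p / ((p+q)/2)) (p' - p) d lam`. On `[0, 1)` this integral is the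
divergence of the mixture, and the extra constant `(1/2) log 2` integrates to zero against
`p' - p` because both densities have total mass one.
-/

open MeasureTheory Set
open scoped ENNReal

/-- Kullback–Leibler divergence `D_KL(α‖β) = ∫ log(dα/dβ) dα` (for `α ≪ β`). -/
noncomputable def klDivergence {Ω : Type*} [MeasurableSpace Ω] (α β : Measure Ω) : ℝ :=
  ∫ x, Real.log (α.rnDeriv β x).toReal ∂α

/-- Jensen–Shannon divergence
`D_JS(α‖β) = ½ D_KL(α ‖ (α+β)/2) + ½ D_KL(β ‖ (α+β)/2)`. -/
noncomputable def jsDivergence {Ω : Type*} [MeasurableSpace Ω] (α β : Measure Ω) : ℝ :=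
  (1/2) * klDivergence α ((2⁻¹ : ℝ≥0∞) • α + (2⁻¹ : ℝ≥0∞) • β)
    + (1/2) * klDivergence β ((2⁻¹ : ℝ≥0∞) • α + (2⁻¹ : ℝ≥0∞) • β)

/-- The integrand of `D_JS` as a function of the two density values. -/
noncomputable def jsIntegrand (a b : ℝ) : ℝ :=
  (1/2) * (a * Real.log (a / ((a + b) / 2))) + (1/2) * (b * Real.log (b / ((a + b) / 2)))

/-! ### Divergences of measures given by densities -/

lemma integral_withDensity_ofReal {Ω : Type*} [MeasurableSpace Ω] (lam : Measure Ω)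
    {a : Ω → ℝ} (ha : Measurable a) (ha0 : ∀ᵐ x ∂lam, 0 ≤ a x) (f : Ω → ℝ) :
    ∫ x, f x ∂(lam.withDensity fun x => ENNReal.ofReal (a x)) = ∫ x, a x * f x ∂lam := by
  rw [integral_withDensity_eq_integral_toReal_smul ha.ennreal_ofReal
    (ae_of_all _ fun _ => ENNReal.ofReal_lt_top)]
  refine integral_congr_ae ?_
  filter_upwards [ha0] with x hx
  simp [ENNReal.toReal_ofReal hx]

lemma smul_withDensity_add {Ω : Type*} [MeasurableSpace Ω] (lam : Measure Ω)
    {a b : Ω → ℝ} (ha : Measurable a) (hb : Measurable b)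
    (ha0 : ∀ᵐ x ∂lam, 0 ≤ a x) (hb0 : ∀ᵐ x ∂lam, 0 ≤ b x) {s t : ℝ} (hs : 0 ≤ s) (ht : 0 ≤ t) :
    ENNReal.ofReal s • (lam.withDensity fun x => ENNReal.ofReal (a x))
      + ENNReal.ofReal t • (lam.withDensity fun x => ENNReal.ofReal (b x))
      = lam.withDensity fun x => ENNReal.ofReal (s * a x + t * b x) := by
  rw [← withDensity_smul _ ha.ennreal_ofReal, ← withDensity_smul _ hb.ennreal_ofReal,
    ← withDensity_add_left (ha.ennreal_ofReal.const_smul _)]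
  refine withDensity_congr_ae ?_
  filter_upwards [ha0, hb0] with x h1 h2
  simp [ENNReal.ofReal_add (mul_nonneg hs h1) (mul_nonneg ht h2), ENNReal.ofReal_mul hs,
    ENNReal.ofReal_mul ht]

/-- The Radon–Nikodym derivative of one density measure with respect to the other is the quotient
of the densities, because `b` is positive almost everywhere. -/
lemma klDivergence_withDensity {Ω : Type*} [MeasurableSpace Ω] (lam : Measure Ω) [IsFiniteMeasure lam]
    {a b : Ω → ℝ} (ha : Measurable a) (hb : Measurable b)
    (ha0 : ∀ᵐ x ∂lam, 0 < a x) (hb0 : ∀ᵐ x ∂lam, 0 < b x) :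
    klDivergence (lam.withDensity fun x => ENNReal.ofReal (a x))
      (lam.withDensity fun x => ENNReal.ofReal (b x))
      = ∫ x, a x * Real.log (a x / b x) ∂lam := by
  have hdiv : Measurable fun x => a x / b x := ha.div hb
  have hab : (lam.withDensity fun x => ENNReal.ofReal (a x)) =
      (lam.withDensity fun x => ENNReal.ofReal (b x)).withDensity
        fun x => ENNReal.ofReal (a x / b x) := by
    rw [← withDensity_mul _ hb.ennreal_ofReal hdiv.ennreal_ofReal]
    refine withDensity_congr_ae ?_
    filter_upwards [hb0] with x h2
    simp only [Pi.mul_apply]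
    rw [← ENNReal.ofReal_mul h2.le, mul_div_cancel₀ _ h2.ne']
  have hrn := Measure.rnDeriv_withDensity (lam.withDensity fun x => ENNReal.ofReal (b x))
    hdiv.ennreal_ofReal
  have hac : (lam.withDensity fun x => ENNReal.ofReal (a x)) ≪
      (lam.withDensity fun x => ENNReal.ofReal (b x)) := by
    rw [hab]; exact withDensity_absolutelyContinuous _ _
  rw [klDivergence, ← integral_withDensity_ofReal lam ha (ha0.mono fun x h => h.le)]
  refine integral_congr_ae ?_
  filter_upwards [hac.ae_le hrn, (withDensity_absolutelyContinuous lam _).ae_le ha0,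
    (withDensity_absolutelyContinuous lam _).ae_le hb0] with x hx h1 h2
  rw [hab, hx]
  rw [ENNReal.toReal_ofReal (div_pos h1 h2).le]

/-- From `1 - 1/t ≤ log t ≤ t - 1` with `t = a / ((a+b)/2) ≤ 2`. -/
lemma abs_log_div_avg_le {a b : ℝ} (ha : 0 < a) (hb : 0 < b) :
    |Real.log (a / ((a + b) / 2))| ≤ 3 + b / a := by
  have hx : 0 < a / ((a + b) / 2) := by positivity
  have h1 := Real.log_le_sub_one_of_pos hx
  have h2 := Real.one_sub_inv_le_log_of_pos hx
  have h3 : a / ((a + b) / 2) ≤ 2 := by rw [div_le_iff₀ (by positivity)]; linarith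
  have h4 : (a / ((a + b) / 2))⁻¹ = 1 / 2 + (b / a) / 2 := by field_simp
  have h5 : 0 < b / a := by positivity
  rw [abs_le]
  constructor <;> linarith

/-- Bounds on `a` and `b` turn `abs_log_div_avg_le` into a uniform bound. -/
lemma abs_log_div_avg_le_of_bounds {a b c C : ℝ} (hc : 0 < c) (ha : c ≤ a) (hb : 0 < b)
    (hbC : b ≤ C) : |Real.log (a / ((a + b) / 2))| ≤ 3 + C / c := by
  have h0 : 0 < a := hc.trans_le ha
  have : b / a ≤ C / c := div_le_div₀ (hb.le.trans hbC) hbC hc ha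
  linarith [abs_log_div_avg_le h0 hb]

lemma integrable_mul_log_div_avg {Ω : Type*} [MeasurableSpace Ω] (lam : Measure Ω)
    [IsFiniteMeasure lam] {a b : Ω → ℝ} (ha : Measurable a) (hb : Measurable b) {ca Ca Cb : ℝ}
    (hca : 0 < ca) (habd : ∀ᵐ x ∂lam, ca ≤ a x ∧ a x ≤ Ca) (hbbd : ∀ᵐ x ∂lam, 0 < b x ∧ b x ≤ Cb) :
    Integrable (fun x => a x * Real.log (a x / ((a x + b x) / 2))) lam := by
  refine Integrable.of_bound (by fun_prop) (Ca * (3 + Cb / ca)) ?_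
  filter_upwards [habd, hbbd] with x h1 h2
  rw [Real.norm_eq_abs, abs_mul]
  have h0 : 0 < a x := hca.trans_le h1.1
  rw [abs_of_pos h0]
  exact mul_le_mul h1.2 (abs_log_div_avg_le_of_bounds hca h1.1 h2.1 h2.2) (abs_nonneg _)
    (h0.le.trans h1.2)

lemma jsDivergence_withDensity {Ω : Type*} [MeasurableSpace Ω] (lam : Measure Ω)
    [IsFiniteMeasure lam] {a b : Ω → ℝ} (ha : Measurable a) (hb : Measurable b) {ca Ca cb Cb : ℝ}
    (hca : 0 < ca) (habd : ∀ᵐ x ∂lam, ca ≤ a x ∧ a x ≤ Ca)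
    (hcb : 0 < cb) (hbbd : ∀ᵐ x ∂lam, cb ≤ b x ∧ b x ≤ Cb) :
    jsDivergence (lam.withDensity fun x => ENNReal.ofReal (a x))
      (lam.withDensity fun x => ENNReal.ofReal (b x))
      = ∫ x, jsIntegrand (a x) (b x) ∂lam := by
  have ha0 : ∀ᵐ x ∂lam, 0 < a x := habd.mono fun x h => hca.trans_le h.1
  have hb0 : ∀ᵐ x ∂lam, 0 < b x := hbbd.mono fun x h => hcb.trans_le h.1
  have hm : Measurable fun x => (a x + b x) / 2 := by fun_prop
  have hm0 : ∀ᵐ x ∂lam, 0 < (a x + b x) / 2 := by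
    filter_upwards [ha0, hb0] with x h1 h2
    positivity
  have h2 : (2⁻¹ : ℝ≥0∞) = ENNReal.ofReal 2⁻¹ := by
    rw [ENNReal.ofReal_inv_of_pos two_pos]; simp
  have hmix : (2⁻¹ : ℝ≥0∞) • (lam.withDensity fun x => ENNReal.ofReal (a x))
      + (2⁻¹ : ℝ≥0∞) • (lam.withDensity fun x => ENNReal.ofReal (b x))
      = lam.withDensity fun x => ENNReal.ofReal ((a x + b x) / 2) := by
    rw [h2, smul_withDensity_add lam ha hb (ha0.mono fun x h => h.le) (hb0.mono fun x h => h.le)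
      (by norm_num) (by norm_num)]
    congr with x
    congr 1
    ring
  have i1 := integrable_mul_log_div_avg lam ha hb hca habd
    (hb0.and (hbbd.mono fun x h => h.2))
  have i2 := integrable_mul_log_div_avg lam hb ha hcb hbbd
    (ha0.and (habd.mono fun x h => h.2))
  simp only [add_comm (b _) (a _)] at i2
  rw [jsDivergence, hmix, klDivergence_withDensity lam ha hm ha0 hm0,
    klDivergence_withDensity lam hb hm hb0 hm0, ← integral_const_mul, ← integral_const_mul,
    ← integral_add (i1.const_mul _) (i2.const_mul _)]
  rfl

/-! ### Differentiation under the integral -/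

/-- Differentiating inside both logarithms contributes
`1 - a/(a+b) - b/(a+b) = 0`. -/
lemma hasDerivAt_jsIntegrand {a b : ℝ} (ha : 0 < a) (hb : 0 < b) :
    HasDerivAt (fun a => jsIntegrand a b) ((1/2) * Real.log (a / ((a + b) / 2))) a := by
  have hid := hasDerivAt_id a
  have havg : HasDerivAt (fun a : ℝ => (a + b) / 2) (1 / 2) a := (hid.add_const b).div_const 2
  have hab : (a + b) / 2 ≠ 0 := by positivity
  have h1 : HasDerivAt (fun a => a / ((a + b) / 2)) _ a := hid.div havg hab
  have h2 : HasDerivAt (fun a => b / ((a + b) / 2)) _ a := (hasDerivAt_const a b).div havg hab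
  have h3 := (hid.mul (h1.log (by positivity))).const_mul (1/2)
  have h4 := ((h2.log (by positivity)).const_mul b).const_mul (1/2)
  refine (h3.add h4).congr_deriv ?_
  have : a + b ≠ 0 := by positivity
  simp only [id]
  field_simp
  ring

/-- **The influence function of the Jensen–Shannon divergence** `μ ↦ D_JS(μ‖ν)`.
Let `lam` be a finite measure and let `μ, ν, μ'` be probability measures with densities
`p, q, p'` w.r.t. `lam`, each bounded above and below by positive constants `lam`-a.e.
Then `ε ↦ D_JS((1-ε) μ + ε μ' ‖ ν)` has one-sided derivative at `ε = 0⁺` equal to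
`∫ ½ log(p/(p+q)) dμ' - ∫ ½ log(p/(p+q)) dμ`, i.e. `x ↦ ½ log(p(x)/(p(x)+q(x)))`
is an influence function of `μ ↦ D_JS(μ‖ν)` at `μ`. -/
theorem js_influence_function {Ω : Type*} [MeasurableSpace Ω]
    (lam : Measure Ω) [IsFiniteMeasure lam]
    (p q p' : Ω → ℝ) (hp : Measurable p) (hq : Measurable q) (hp' : Measurable p')
    (cp Cp : ℝ) (hcp : 0 < cp) (hpbd : ∀ᵐ x ∂lam, cp ≤ p x ∧ p x ≤ Cp)
    (cq Cq : ℝ) (hcq : 0 < cq) (hqbd : ∀ᵐ x ∂lam, cq ≤ q x ∧ q x ≤ Cq)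
    (cp' Cp' : ℝ) (hcp' : 0 < cp') (hp'bd : ∀ᵐ x ∂lam, cp' ≤ p' x ∧ p' x ≤ Cp')
    (hμ : IsProbabilityMeasure (lam.withDensity fun x => ENNReal.ofReal (p x)))
    (hν : IsProbabilityMeasure (lam.withDensity fun x => ENNReal.ofReal (q x)))
    (hμ' : IsProbabilityMeasure (lam.withDensity fun x => ENNReal.ofReal (p' x))) :
    HasDerivWithinAt
      (fun ε : ℝ => jsDivergence
        (ENNReal.ofReal (1 - ε) • (lam.withDensity fun x => ENNReal.ofReal (p x))
          + ENNReal.ofReal ε • (lam.withDensity fun x => ENNReal.ofReal (p' x)))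
        (lam.withDensity fun x => ENNReal.ofReal (q x)))
      ((∫ x, (1/2) * Real.log (p x / (p x + q x))
          ∂(lam.withDensity fun x => ENNReal.ofReal (p' x)))
        - ∫ x, (1/2) * Real.log (p x / (p x + q x))
          ∂(lam.withDensity fun x => ENNReal.ofReal (p x)))
      (Ici (0:ℝ)) 0 := by
  have hp0 : ∀ᵐ x ∂lam, 0 < p x := hpbd.mono fun x h => hcp.trans_le h.1
  have hp'0 : ∀ᵐ x ∂lam, 0 < p' x := hp'bd.mono fun x h => hcp'.trans_le h.1
  have hq0 : ∀ᵐ x ∂lam, 0 < q x := hqbd.mono fun x h => hcq.trans_le h.1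
  have ip : Integrable p lam := Integrable.of_bound (by fun_prop) Cp <| by
    filter_upwards [hpbd, hp0] with x h h0
    rw [Real.norm_eq_abs, abs_of_pos h0]
    exact h.2
  have ip' : Integrable p' lam := Integrable.of_bound (by fun_prop) Cp' <| by
    filter_upwards [hp'bd, hp'0] with x h h0
    rw [Real.norm_eq_abs, abs_of_pos h0]
    exact h.2
  have mass_p : ∫ x, p x ∂lam = 1 := by
    have := integral_withDensity_ofReal lam hp (hp0.mono fun x h => h.le) fun _ => 1
    simpa using this.symm
  have mass_p' : ∫ x, p' x ∂lam = 1 := by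
    have := integral_withDensity_ofReal lam hp' (hp'0.mono fun x h => h.le) fun _ => 1
    simpa using this.symm
  set m : ℝ → Ω → ℝ := fun ε x => (1 - ε) * p x + ε * p' x with hm
  have hmm : ∀ ε, Measurable (m ε) := fun ε => by fun_prop
  -- For `|ε| < δ` the perturbation `ε (p' - p)` has size at most `cp / 2`.
  set M : ℝ := |Cp| + |Cp'| + 1 with hM
  have hMpos : 0 < M := by positivity
  set δ : ℝ := cp / 2 / M with hδ
  have hδpos : 0 < δ := by positivity
  have hdiff : ∀ᵐ x ∂lam, |p' x - p x| ≤ M := by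
    filter_upwards [hpbd, hp'bd, hp0, hp'0] with x h1 h2 h3 h4
    rw [abs_le]
    have := le_abs_self Cp
    have := le_abs_self Cp'
    constructor <;> linarith [abs_nonneg Cp, abs_nonneg Cp']
  have hmlow : ∀ᵐ x ∂lam, ∀ ε ∈ Metric.ball (0:ℝ) δ, cp / 2 ≤ m ε x := by
    filter_upwards [hpbd, hdiff] with x h1 h2 ε hε
    rw [mem_ball_zero_iff, Real.norm_eq_abs] at hε
    have h3 : |ε * (p' x - p x)| ≤ δ * M := by
      rw [abs_mul]
      exact mul_le_mul hε.le h2 (abs_nonneg _) hδpos.le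
    have h4 : δ * M = cp / 2 := by rw [hδ]; field_simp
    have h5 : m ε x = p x + ε * (p' x - p x) := by simp only [hm]; ring
    rw [h5]
    linarith [(abs_le.1 h3).1]
  have hm0 : m 0 = p := by funext x; simp [hm]
  have hint : Integrable (fun x => jsIntegrand (m 0 x) (q x)) lam := by
    rw [hm0]
    have i1 := integrable_mul_log_div_avg lam hp hq hcp hpbd
      (hq0.and (hqbd.mono fun x h => h.2))
    have i2 := integrable_mul_log_div_avg lam hq hp hcq hqbd
      (hp0.and (hpbd.mono fun x h => h.2))
    simp only [add_comm (q _) (p _)] at i2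
    exact (i1.const_mul _).add (i2.const_mul _)
  have hderiv := (hasDerivAt_integral_of_dominated_loc_of_deriv_le
    (μ := lam) (F := fun ε x => jsIntegrand (m ε x) (q x))
    (F' := fun ε x => (1/2) * Real.log (m ε x / ((m ε x + q x) / 2)) * (p' x - p x))
    (x₀ := (0:ℝ)) (bound := fun _ => (1/2) * (3 + Cq / (cp / 2)) * M)
    (Metric.ball_mem_nhds (0:ℝ) hδpos)
    (Filter.Eventually.of_forall fun ε => by
      have := hmm ε
      unfold jsIntegrand
      fun_prop) hint
    (by have := hmm 0; fun_prop)
    (by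
      filter_upwards [hmlow, hqbd, hq0, hdiff] with x h1 h2 h3 h4 ε hε
      rw [Real.norm_eq_abs, abs_mul, abs_mul, abs_of_pos (one_half_pos (α := ℝ))]
      have h5 := abs_log_div_avg_le_of_bounds (half_pos hcp) (h1 ε hε) h3 h2.2
      have h6 := (abs_nonneg _).trans h5
      gcongr)
    (integrable_const _)
    (by
      filter_upwards [hmlow, hq0] with x h1 h3 ε hε
      have h5 : HasDerivAt (fun ε => m ε x) (p' x - p x) ε := by
        have := (((hasDerivAt_id ε).const_sub 1).mul_const (p x)).add
          ((hasDerivAt_id ε).mul_const (p' x))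
        refine this.congr_deriv ?_
        ring
      exact (hasDerivAt_jsIntegrand ((half_pos hcp).trans_le (h1 ε hε)) h3).comp ε h5)).2
  have hval : ∫ x, (1/2) * Real.log (m 0 x / ((m 0 x + q x) / 2)) * (p' x - p x) ∂lam
      = (∫ x, (1/2) * Real.log (p x / (p x + q x))
          ∂(lam.withDensity fun x => ENNReal.ofReal (p' x)))
        - ∫ x, (1/2) * Real.log (p x / (p x + q x))
          ∂(lam.withDensity fun x => ENNReal.ofReal (p x)) := by
    rw [integral_withDensity_ofReal lam hp' (hp'0.mono fun x h => h.le),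
      integral_withDensity_ofReal lam hp (hp0.mono fun x h => h.le), hm0]
    have hlog : ∀ᵐ x ∂lam, Real.log (p x / ((p x + q x) / 2))
        = Real.log 2 + Real.log (p x / (p x + q x)) := by
      filter_upwards [hp0, hq0] with x h1 h2
      rw [← Real.log_mul two_ne_zero (by positivity)]
      congr 1
      field_simp
    have hbd : ∀ᵐ x ∂lam, ‖(1/2) * Real.log (p x / (p x + q x))‖
        ≤ (1/2) * (3 + Cq / cp + |Real.log 2|) := by
      filter_upwards [hpbd, hqbd, hq0, hlog] with x h1 h2 h3 h4
      have h5 := abs_log_div_avg_le_of_bounds hcp h1.1 h3 h2.2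
      rw [Real.norm_eq_abs, abs_mul, abs_of_pos (one_half_pos (α := ℝ)),
        eq_sub_of_add_eq' h4.symm]
      have := abs_sub (Real.log (p x / ((p x + q x) / 2))) (Real.log 2)
      gcongr
      linarith
    have hg : Measurable fun x => (1/2) * Real.log (p x / (p x + q x)) := by
      have : Measurable fun x => p x / (p x + q x) := by fun_prop
      exact this.log.const_mul _
    have j1 : Integrable (fun x => p x * ((1/2) * Real.log (p x / (p x + q x)))) lam :=
      ip.mul_bdd (c := (1/2) * (3 + Cq / cp + |Real.log 2|)) hg.aestronglyMeasurable hbd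
    have j2 : Integrable (fun x => p' x * ((1/2) * Real.log (p x / (p x + q x)))) lam :=
      ip'.mul_bdd (c := (1/2) * (3 + Cq / cp + |Real.log 2|)) hg.aestronglyMeasurable hbd
    have hzero : ∫ x, (1/2) * Real.log 2 * (p' x - p x) ∂lam = 0 := by
      rw [integral_const_mul, integral_sub ip' ip, mass_p, mass_p']
      simp
    have hsplit : ∫ x, (1/2) * Real.log (p x / ((p x + q x) / 2)) * (p' x - p x) ∂lam
        = ∫ x, ((1/2) * Real.log 2 * (p' x - p x)
          + (p' x * ((1/2) * Real.log (p x / (p x + q x)))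
            - p x * ((1/2) * Real.log (p x / (p x + q x))))) ∂lam := by
      refine integral_congr_ae ?_
      filter_upwards [hlog] with x hx
      rw [hx]
      ring
    have j0 : Integrable (fun x => (1/2) * Real.log 2 * (p' x - p x)) lam :=
      (ip'.sub ip).const_mul _
    have j3 : Integrable (fun x => p' x * ((1/2) * Real.log (p x / (p x + q x)))
        - p x * ((1/2) * Real.log (p x / (p x + q x)))) lam := j2.sub j1
    rw [hsplit, integral_add j0 j3, hzero, zero_add, integral_sub j2 j1]
  rw [hval] at hderiv
  have hjs : ∀ ε ∈ Ico (0:ℝ) 1, jsDivergence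
        (ENNReal.ofReal (1 - ε) • (lam.withDensity fun x => ENNReal.ofReal (p x))
          + ENNReal.ofReal ε • (lam.withDensity fun x => ENNReal.ofReal (p' x)))
        (lam.withDensity fun x => ENNReal.ofReal (q x))
      = ∫ x, jsIntegrand (m ε x) (q x) ∂lam := by
    intro ε hε
    have hε1 : 0 < 1 - ε := sub_pos.2 hε.2
    rw [smul_withDensity_add lam hp hp' (hp0.mono fun x h => h.le) (hp'0.mono fun x h => h.le)
      hε1.le hε.1]
    refine jsDivergence_withDensity lam (hmm ε) hq (ca := (1 - ε) * cp + ε * cp')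
      (Ca := (1 - ε) * Cp + ε * Cp')
      (add_pos_of_pos_of_nonneg (mul_pos hε1 hcp) (mul_nonneg hε.1 hcp'.le)) ?_ hcq hqbd
    filter_upwards [hpbd, hp'bd] with x h1 h2
    have := hε.1
    exact ⟨add_le_add (mul_le_mul_of_nonneg_left h1.1 hε1.le) (mul_le_mul_of_nonneg_left h2.1 this),
      add_le_add (mul_le_mul_of_nonneg_left h1.2 hε1.le) (mul_le_mul_of_nonneg_left h2.2 this)⟩
  refine hderiv.hasDerivWithinAt.congr_of_eventuallyEq ?_ (hjs 0 ⟨le_rfl, one_pos⟩)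
  filter_upwards [Ico_mem_nhdsGE (one_pos (α := ℝ))] with ε hε using hjs ε hε
end

section
/- Let q > 0 and let φ ∈ ℝ satisfy e^{2φ} < 2. Define f : [0, ∞) → ℝ by f(p) = φ·p − (1/2) p log(p / ((p+q)/2)) − (1/2) q log(q / ((p+q)/2)), with the convention p log p = 0 at p = 0. Then f is maximized over p ∈ [0, ∞) at p* = q e^{2φ} / (2 − e^{2φ}), and the maximum value is sup_{p ≥ 0} f(p) = −(1/2) q log(2 − e^{2φ}). -/
/-!
Write `E = exp (2φ)` and `m = (p + q) / 2`. Twice the difference between `f p` and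
`-½ q log (2 - E)` is `p log (E m / p) + q log ((2 - E) m / q)`. By `log x ≤ x - 1`, applied to
each term (`mul_log_sub_log_div_le`), it is at most `(E m - p) + ((2 - E) m - q) = 2 m - p - q = 0`.
Equality holds when both arguments of the logarithm are `1`, which is `p = q E / (2 - E)`.
-/

/-- The inequality `p log (c m / p) ≤ c m - p`, with the logarithm split so that the case `p = 0`
is included. -/
lemma mul_log_sub_log_div_le {p m c : ℝ} (hp : 0 ≤ p) (hm : 0 < m) (hc : 0 < c) :
    p * (Real.log c - Real.log (p / m)) ≤ c * m - p := by
  rcases hp.eq_or_lt with rfl | hp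
  · simpa using (mul_pos hc hm).le
  · rw [← Real.log_div hc.ne' (div_pos hp hm).ne']
    calc p * Real.log (c / (p / m)) ≤ p * (c / (p / m) - 1) := by
          gcongr
          exact Real.log_le_sub_one_of_pos (by positivity)
      _ = c * m - p := by field_simp

/-- **Pointwise maximization in the convex conjugate of the Jensen–Shannon divergence.**
For `q > 0` and `φ ∈ ℝ` with `e^{2φ} < 2`, the function
`f(p) = φ p - ½ p log(p / ((p+q)/2)) - ½ q log(q / ((p+q)/2))` on `[0, ∞)`
(with the convention `p log p = 0` at `p = 0`, which holds automatically since
`Real.log 0 = 0`) attains its maximum at `p* = q e^{2φ} / (2 - e^{2φ})`, and the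
maximum value is `-½ q log(2 - e^{2φ})`. -/
theorem js_conjugate_pointwise_max (q φ : ℝ) (hq : 0 < q) (hφ : Real.exp (2 * φ) < 2) :
    (fun p : ℝ => φ * p - (1/2) * p * Real.log (p / ((p + q) / 2))
        - (1/2) * q * Real.log (q / ((p + q) / 2)))
      (q * Real.exp (2 * φ) / (2 - Real.exp (2 * φ)))
      = -(1/2) * q * Real.log (2 - Real.exp (2 * φ)) ∧
    0 ≤ q * Real.exp (2 * φ) / (2 - Real.exp (2 * φ)) ∧
    ∀ p : ℝ, 0 ≤ p →
      (fun p : ℝ => φ * p - (1/2) * p * Real.log (p / ((p + q) / 2))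
          - (1/2) * q * Real.log (q / ((p + q) / 2))) p
        ≤ -(1/2) * q * Real.log (2 - Real.exp (2 * φ)) := by
  have hE := Real.exp_pos (2 * φ)
  have hlog : Real.log (Real.exp (2 * φ)) = 2 * φ := Real.log_exp _
  set E := Real.exp (2 * φ)
  have hd : 0 < 2 - E := by linarith
  refine ⟨?_, by positivity, fun p hp => ?_⟩
  · have hm : (q * E / (2 - E) + q) / 2 = q / (2 - E) := by
      field_simp
      ring
    have h1 : q * E / (2 - E) / (q / (2 - E)) = E := by field_simp
    have h2 : q / (q / (2 - E)) = 2 - E := by field_simp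
    simp only [hm, h1, h2, hlog]
    ring
  · have hm : 0 < (p + q) / 2 := by positivity
    have h1 := mul_log_sub_log_div_le hp hm hE
    have h2 := mul_log_sub_log_div_le hq.le hm hd
    rw [hlog] at h1
    dsimp only
    linarith
end

section
/- Let λ be a σ-finite measure on a measurable space, let q be a probability density with respect to λ with q > 0 λ-a.e., and let φ be a measurable function with sup_x e^{2φ(x)} < 2. Then the supremum, over all measurable functions p ≥ 0 with ∫ p dλ < ∞, of ∫ [ φ p − (1/2) p log(p / ((p+q)/2)) − (1/2) q log(q / ((p+q)/2)) ] dλ equals −(1/2) ∫ q log(2 − e^{2φ}) dλ, and it is attained at p = q e^{2φ}/(2 − e^{2φ}). -/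
/-!
The conjugate is computed pointwise. With `e = exp (2 φ)` and `m = (p + q) / 2`, twice the
integrand plus `q log (2 - e)` equals `p log (e m / p) + q log ((2 - e) m / q)`; since
`log t ≤ t - 1`, this is at most `(e m - p) + ((2 - e) m - q) = 0`, with equality exactly when
`p = e m` and `q = (2 - e) m`, that is, `p = q e / (2 - e)`. These are
`jsConjIntegrand_le` and `jsConjIntegrand_eq`. The uniform bound `e ≤ c < 2` makes
`e / (2 - e)` and `log (2 - e)` bounded, so the maximizer and the optimal integrand are
products of the integrable `q` with bounded functions.
-/

open MeasureTheory Set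

/-- The integrand in the computation of the convex conjugate of the Jensen–Shannon
divergence: `x ↦ φ(x) p(x) - ½ p(x) log(p(x)/((p(x)+q(x))/2)) - ½ q(x) log(q(x)/((p(x)+q(x))/2))`
(with the convention `p log p = 0` at `p = 0`, automatic since `Real.log 0 = 0`). -/
noncomputable def jsConjIntegrand {Ω : Type*} (φ q p : Ω → ℝ) : Ω → ℝ := fun x =>
  φ x * p x - (1/2) * p x * Real.log (p x / ((p x + q x) / 2))
    - (1/2) * q x * Real.log (q x / ((p x + q x) / 2))

/-- The tangent inequality `log t ≤ t - 1` at `t = b / a`, scaled by `a`. -/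
lemma mul_log_div_ge {a b : ℝ} (ha : 0 ≤ a) (hb : 0 < b) :
    a - b ≤ a * Real.log (a / b) := by
  rcases ha.eq_or_lt with rfl | ha
  · simp [hb.le]
  have h := mul_le_mul_of_nonneg_left (Real.log_le_sub_one_of_pos (div_pos hb ha)) ha.le
  rw [← inv_div a b, Real.log_inv, inv_div, mul_sub, mul_div_cancel₀ b ha.ne'] at h
  linarith

lemma jsConjIntegrand_le {Ω : Type*} {φ q p : Ω → ℝ} {x : Ω} (hq : 0 < q x) (hp : 0 ≤ p x)
    (he : Real.exp (2 * φ x) < 2) :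
    jsConjIntegrand φ q p x ≤ -(1/2) * (q x * Real.log (2 - Real.exp (2 * φ x))) := by
  unfold jsConjIntegrand
  have hm : 0 < (p x + q x) / 2 := by positivity
  have he0 := Real.exp_pos (2 * φ x)
  have he2 : 0 < 2 - Real.exp (2 * φ x) := by linarith
  set m := (p x + q x) / 2 with hmdef
  have h1 := mul_log_div_ge hp (mul_pos he0 hm)
  have h2 := mul_log_div_ge hq.le (mul_pos he2 hm)
  have e1 : p x * Real.log (p x / (Real.exp (2 * φ x) * m))
      = p x * (Real.log (p x / m) - 2 * φ x) := by
    rcases hp.eq_or_lt with h0 | h0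
    · simp [← h0]
    · rw [mul_comm, ← mul_comm m, ← div_div, Real.log_div (by positivity) he0.ne', Real.log_exp,
        mul_comm]
  have e2 : Real.log (q x / ((2 - Real.exp (2 * φ x)) * m))
      = Real.log (q x / m) - Real.log (2 - Real.exp (2 * φ x)) := by
    rw [mul_comm, ← div_div, Real.log_div (by positivity) he2.ne']
  rw [e1] at h1
  rw [e2] at h2
  linarith

lemma jsConjIntegrand_eq {Ω : Type*} {φ q : Ω → ℝ} {x : Ω} (hq : 0 < q x)
    (he : Real.exp (2 * φ x) < 2) :
    jsConjIntegrand φ q (fun x => q x * Real.exp (2 * φ x) / (2 - Real.exp (2 * φ x))) x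
      = -(1/2) * (q x * Real.log (2 - Real.exp (2 * φ x))) := by
  have he2 : 0 < 2 - Real.exp (2 * φ x) := by linarith
  -- At the maximizer, `m = q / (2 - e)`.
  have hm : (q x * Real.exp (2 * φ x) / (2 - Real.exp (2 * φ x)) + q x) / 2
      = q x / (2 - Real.exp (2 * φ x)) := by
    field_simp
    ring
  have h1 : q x * Real.exp (2 * φ x) / (2 - Real.exp (2 * φ x))
      / (q x / (2 - Real.exp (2 * φ x))) = Real.exp (2 * φ x) := by
    field_simp
  have h2 : q x / (q x / (2 - Real.exp (2 * φ x))) = 2 - Real.exp (2 * φ x) := by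
    field_simp
  simp only [jsConjIntegrand, hm, h1, h2, Real.log_exp]
  ring


/-- **Convex conjugate of the Jensen–Shannon divergence, expressed via densities.**
Let `lam` be a σ-finite measure, `q` a probability density w.r.t. `lam` with `q > 0`
`lam`-a.e., and `φ` measurable with `sup_x e^{2 φ(x)} < 2`.  Then the supremum over
measurable `p ≥ 0` with `∫ p dlam < ∞` of
`∫ [φ p - ½ p log(p/((p+q)/2)) - ½ q log(q/((p+q)/2))] dlam` equals
`-½ ∫ q log(2 - e^{2φ}) dlam`, and it is attained at `p = q e^{2φ} / (2 - e^{2φ})`. -/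
theorem js_conjugate_integral {Ω : Type*} [MeasurableSpace Ω]
    (lam : Measure Ω) [SigmaFinite lam]
    (q : Ω → ℝ) (hqmeas : Measurable q) (hqpos : ∀ᵐ x ∂lam, 0 < q x)
    (hqint : Integrable q lam) (hq1 : ∫ x, q x ∂lam = 1)
    (φ : Ω → ℝ) (hφmeas : Measurable φ)
    (c : ℝ) (hc : c < 2) (hφbd : ∀ x, Real.exp (2 * φ x) ≤ c) :
    (∀ p : Ω → ℝ, Measurable p → (∀ x, 0 ≤ p x) → Integrable p lam →
      Integrable (jsConjIntegrand φ q p) lam →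
      ∫ x, jsConjIntegrand φ q p x ∂lam
        ≤ -(1/2) * ∫ x, q x * Real.log (2 - Real.exp (2 * φ x)) ∂lam) ∧
    Measurable (fun x => q x * Real.exp (2 * φ x) / (2 - Real.exp (2 * φ x))) ∧
    (∀ᵐ x ∂lam, 0 ≤ q x * Real.exp (2 * φ x) / (2 - Real.exp (2 * φ x))) ∧
    Integrable (fun x => q x * Real.exp (2 * φ x) / (2 - Real.exp (2 * φ x))) lam ∧
    Integrable
      (jsConjIntegrand φ q fun x => q x * Real.exp (2 * φ x) / (2 - Real.exp (2 * φ x)))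
      lam ∧
    ∫ x, jsConjIntegrand φ q
        (fun x => q x * Real.exp (2 * φ x) / (2 - Real.exp (2 * φ x))) x ∂lam
      = -(1/2) * ∫ x, q x * Real.log (2 - Real.exp (2 * φ x)) ∂lam := by
  have he : ∀ x, Real.exp (2 * φ x) < 2 := fun x => (hφbd x).trans_lt hc
  have hlog : Integrable (fun x => q x * Real.log (2 - Real.exp (2 * φ x))) lam := by
    refine hqint.mul_bdd (c := max |Real.log (2 - c)| |Real.log 2|)
      (Measurable.aestronglyMeasurable (by fun_prop)) (Filter.Eventually.of_forall fun x => ?_)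
    have h1 := hφbd x
    have h2 := he x
    have h3 := Real.exp_pos (2 * φ x)
    exact abs_le_max_abs_abs (Real.log_le_log (by linarith) (by linarith))
      (Real.log_le_log (by linarith) (by linarith))
  have heq : jsConjIntegrand φ q
      (fun x => q x * Real.exp (2 * φ x) / (2 - Real.exp (2 * φ x)))
      =ᵐ[lam] fun x => -(1/2) * (q x * Real.log (2 - Real.exp (2 * φ x))) := by
    filter_upwards [hqpos] with x hx using jsConjIntegrand_eq hx (he x)
  refine ⟨fun p _ hp _ hint => ?_, by fun_prop, ?_, ?_, ?_, ?_⟩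
  · rw [← integral_const_mul]
    refine integral_mono_ae hint (hlog.const_mul _) ?_
    filter_upwards [hqpos] with x hx using jsConjIntegrand_le hx (hp x) (he x)
  · filter_upwards [hqpos] with x hx
    have := he x
    exact div_nonneg (by positivity) (by linarith)
  · simp only [mul_div_assoc]
    refine hqint.mul_bdd (c := 2 / (2 - c)) (Measurable.aestronglyMeasurable (by fun_prop))
      (Filter.Eventually.of_forall fun x => ?_)
    have h1 := hφbd x
    have h2 := he x
    have h3 := Real.exp_pos (2 * φ x)
    rw [Real.norm_of_nonneg (div_nonneg h3.le (by linarith))]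
    exact div_le_div₀ (by norm_num) h2.le (by linarith) (by linarith)
  · exact (hlog.const_mul _).congr heq.symm
  · rw [integral_congr_ae heq, integral_const_mul]
end

section
/- Let λ be a finite measure on a measurable space Z, let p : Z → ℝ (prior density) and ℓ : Z → ℝ (likelihood, ℓ(z) = p(x|z)) be measurable functions bounded above and below by positive constants λ-a.e., and let π(z) = ℓ(z) p(z) / ∫ ℓ p dλ be the posterior density. Let q, q′ be probability densities with respect to λ that are λ-a.e. bounded above and below by positive constants, and write q_ε = (1−ε) q + ε q′. Then the one-sided derivative d/dε D_KL(q_ε λ ‖ π λ)|_{ε=0+} exists and equals ∫ log( q(z) / (ℓ(z) p(z)) ) (q′(z) − q(z)) λ(dz); equivalently, z ↦ log( q(z) / (p(x|z) p(z)) ) is an influence function of the variational inference objective q ↦ D_KL(q ‖ π) at q. -/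
/-!
With densities `q_ε = (1-ε) q + ε q'` and `π`, the Radon–Nikodym derivative is the quotient of
densities, so `D_KL(q_ε lam ‖ π lam) = ∫ q_ε (log q_ε - log π) dlam`
(`klDivergence_withDensity`). The pointwise derivative in `ε` is
`(log q_ε - log π + 1) (q' - q)`. For `ε` in a two-sided neighbourhood of `0` the density `q_ε`
stays between two positive constants, so this derivative is bounded, hence dominated on the finite
measure space, and one may differentiate under the integral sign
(`hasDerivAt_integral_mul_log_sub`). At `ε = 0`, the constants `1` and `log ∫ l p dlam`
(the normalization of `π`) integrate to zero against `q' - q`, because both densities have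
mass one.
-/

open MeasureTheory Set
open scoped ENNReal

/-- For densities positive almost everywhere, the Kullback–Leibler divergence is the usual
integral of `f (log f - log g)` against the reference measure. -/
lemma klDivergence_withDensity_s8 {Z : Type*} [MeasurableSpace Z] (lam : Measure Z)
    [IsFiniteMeasure lam] (f g : Z → ℝ) (hf : Measurable f) (hg : Measurable g)
    (hf0 : ∀ᵐ z ∂lam, 0 < f z) (hg0 : ∀ᵐ z ∂lam, 0 < g z) :
    klDivergence (lam.withDensity fun z => ENNReal.ofReal (f z))
      (lam.withDensity fun z => ENNReal.ofReal (g z))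
      = ∫ z, f z * (Real.log (f z) - Real.log (g z)) ∂lam := by
  have h1 := Measure.rnDeriv_withDensity_left (μ := lam)
    (ν := lam.withDensity fun z => ENNReal.ofReal (g z))
    (f := fun z => ENNReal.ofReal (f z)) hf.ennreal_ofReal.aemeasurable
    (Filter.Eventually.of_forall fun _ => ENNReal.ofReal_ne_top)
  have h2 := Measure.rnDeriv_withDensity_right lam lam
    (f := fun z => ENNReal.ofReal (g z)) hg.ennreal_ofReal.aemeasurable
    (by filter_upwards [hg0] with z hz; simpa using hz)
    (Filter.Eventually.of_forall fun _ => ENNReal.ofReal_ne_top)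
  have hac : lam ≪ lam.withDensity fun z => ENNReal.ofReal (g z) :=
    withDensity_absolutelyContinuous' hg.ennreal_ofReal.aemeasurable
      (by filter_upwards [hg0] with z hz; simpa using hz)
  unfold klDivergence
  rw [integral_withDensity_eq_integral_toReal_smul hf.ennreal_ofReal
    (Filter.Eventually.of_forall fun _ => ENNReal.ofReal_lt_top)]
  refine integral_congr_ae ?_
  filter_upwards [hac.ae_le h1, h2, Measure.rnDeriv_self lam, hf0, hg0] with z h1 h2 h3 hf hg
  rw [h1, h2, h3, smul_eq_mul, ENNReal.toReal_ofReal hf.le, ENNReal.toReal_mul,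
    ENNReal.toReal_mul, ENNReal.toReal_inv, ENNReal.toReal_ofReal hf.le,
    ENNReal.toReal_ofReal hg.le, ENNReal.toReal_one, mul_one, ← div_eq_mul_inv,
    Real.log_div hf.ne' hg.ne']

lemma abs_log_le_of_mem {a b x : ℝ} (ha : 0 < a) (h1 : a ≤ x) (h2 : x ≤ b) :
    |Real.log x| ≤ |Real.log a| + |Real.log b| := by
  have hl := Real.log_le_log ha h1
  have hu := Real.log_le_log (ha.trans_le h1) h2
  rw [abs_le]
  constructor
  · linarith [neg_abs_le (Real.log a), abs_nonneg (Real.log b)]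
  · linarith [le_abs_self (Real.log b), abs_nonneg (Real.log a)]

lemma mixture_mem {c M x y ε : ℝ} (hc : 0 < c) (hcx : c ≤ x) (hx : x ≤ M)
    (hy0 : 0 < y) (hy : y ≤ M) (hε : |ε| < c / (2 * M)) :
    c / 2 ≤ (1 - ε) * x + ε * y ∧ (1 - ε) * x + ε * y ≤ 2 * M := by
  have hM : 0 < M := hc.trans_le (hcx.trans hx)
  have h1 : |ε| * M ≤ c / 2 := by
    have := (lt_div_iff₀ (by positivity)).1 hε
    linarith
  have h2 : |ε * (y - x)| ≤ c / 2 := by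
    rw [abs_mul]
    refine le_trans ?_ h1
    refine mul_le_mul_of_nonneg_left ?_ (abs_nonneg _)
    rw [abs_le]; constructor <;> linarith
  obtain ⟨h3, h4⟩ := abs_le.1 h2
  constructor <;> nlinarith

/-- Differentiation under the integral sign for the (cross-)entropy along a mixture of two
densities; `w` plays the role of the logarithm of the target density. -/
lemma hasDerivAt_integral_mul_log_sub {Z : Type*} [MeasurableSpace Z] (lam : Measure Z)
    [IsFiniteMeasure lam] (q q' w : Z → ℝ) (hq : Measurable q) (hq' : Measurable q')
    (hw : Measurable w) {c M W : ℝ} (hc : 0 < c) (hM : 0 < M)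
    (hqb : ∀ᵐ z ∂lam, c ≤ q z ∧ q z ≤ M) (hq'b : ∀ᵐ z ∂lam, 0 < q' z ∧ q' z ≤ M)
    (hwb : ∀ᵐ z ∂lam, |w z| ≤ W) :
    Integrable (fun z => (Real.log (q z) - w z + 1) * (q' z - q z)) lam ∧
    HasDerivAt (fun ε : ℝ => ∫ z, ((1 - ε) * q z + ε * q' z) *
        (Real.log ((1 - ε) * q z + ε * q' z) - w z) ∂lam)
      (∫ z, (Real.log (q z) - w z + 1) * (q' z - q z) ∂lam) 0 := by
  set B : ℝ := |Real.log (c / 2)| + |Real.log (2 * M)| + W with hB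
  have hδ : 0 < c / (2 * M) := by positivity
  have key := hasDerivAt_integral_of_dominated_loc_of_deriv_le (μ := lam) (𝕜 := ℝ)
    (F := fun (ε : ℝ) z => ((1 - ε) * q z + ε * q' z) *
      (Real.log ((1 - ε) * q z + ε * q' z) - w z))
    (F' := fun (ε : ℝ) z =>
      (Real.log ((1 - ε) * q z + ε * q' z) - w z + 1) * (q' z - q z))
    (x₀ := (0 : ℝ)) (bound := fun _ => (B + 1) * M)
    (s := Metric.ball 0 (c / (2 * M))) (Metric.ball_mem_nhds _ hδ)
    (Filter.Eventually.of_forall fun ε => by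
      have : Measurable fun z => ((1 - ε) * q z + ε * q' z) *
        (Real.log ((1 - ε) * q z + ε * q' z) - w z) := by fun_prop
      exact this.aestronglyMeasurable)
    ?_ ?_ ?_ (integrable_const _) ?_
  · simpa using key
  · refine Integrable.of_bound (C := M * B) ?_ ?_
    · have : Measurable fun z => ((1 - (0:ℝ)) * q z + 0 * q' z) *
        (Real.log ((1 - 0) * q z + 0 * q' z) - w z) := by fun_prop
      exact this.aestronglyMeasurable
    · filter_upwards [hqb, hq'b, hwb] with z h1 h2 h3
      have hlog := abs_log_le_of_mem (a := c / 2) (b := 2 * M) (x := q z) (by positivity)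
        (by linarith [h1.1]) (by linarith [h1.2])
      have hsub : |Real.log (q z) - w z| ≤ B := (abs_sub _ _).trans (by linarith)
      have hqa : |q z| ≤ M := by rw [abs_le]; constructor <;> linarith [h1.1, h1.2]
      simp only [sub_zero, one_mul, zero_mul, add_zero, Real.norm_eq_abs, abs_mul]
      exact mul_le_mul hqa hsub (abs_nonneg _) hM.le
  · have : Measurable fun z =>
        (Real.log ((1 - (0:ℝ)) * q z + 0 * q' z) - w z + 1) * (q' z - q z) := by fun_prop
    exact this.aestronglyMeasurable
  · filter_upwards [hqb, hq'b, hwb] with z h1 h2 h3 ε hε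
    have hε' : |ε| < c / (2 * M) := by simpa using hε
    obtain ⟨h4, h5⟩ := mixture_mem hc h1.1 h1.2 h2.1 h2.2 hε'
    have hlog := abs_log_le_of_mem (by positivity) h4 h5
    rw [Real.norm_eq_abs, abs_mul]
    have hsub : |Real.log ((1 - ε) * q z + ε * q' z) - w z| ≤ B :=
      (abs_sub _ _).trans (by linarith)
    have hadd : |Real.log ((1 - ε) * q z + ε * q' z) - w z + 1| ≤ B + 1 :=
      (abs_add_le _ _).trans (by rw [abs_one]; linarith)
    refine mul_le_mul hadd ?_ (abs_nonneg _) ((abs_nonneg _).trans hadd)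
    rw [abs_le]; constructor <;> linarith [h1.1, h1.2, h2.1, h2.2]
  · filter_upwards [hqb, hq'b] with z h1 h2 ε hε
    have hε' : |ε| < c / (2 * M) := by simpa using hε
    obtain ⟨h4, -⟩ := mixture_mem hc h1.1 h1.2 h2.1 h2.2 hε'
    have hpos : 0 < (1 - ε) * q z + ε * q' z := by linarith
    have hm : HasDerivAt (fun ε : ℝ => (1 - ε) * q z + ε * q' z) (q' z - q z) ε := by
      have := (((hasDerivAt_id ε).const_sub 1).mul_const (q z)).add
        ((hasDerivAt_id ε).mul_const (q' z))
      refine this.congr_deriv ?_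
      ring
    refine (hm.mul ((hm.log hpos.ne').sub_const (w z))).congr_deriv ?_
    rw [mul_div_cancel₀ _ hpos.ne']
    ring

/-- **The influence function of the variational inference objective**
`q ↦ D_KL(q ‖ p(z|x))`.  Let `lam` be a finite measure on `Z`, let `p` (prior density)
and `l` (likelihood `z ↦ p(x|z)`) be measurable and bounded above and below by positive
constants `lam`-a.e., and let the posterior density be `π(z) = l(z) p(z) / ∫ l p dlam`.
Let `q, q'` be probability densities w.r.t. `lam`, bounded above and below by positive
constants `lam`-a.e., and set `q_ε = (1-ε) q + ε q'`.  Then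
`ε ↦ D_KL(q_ε·lam ‖ π·lam)` has one-sided derivative at `ε = 0⁺` equal to
`∫ log(q(z)/(l(z) p(z))) (q'(z) - q(z)) dlam`, i.e. `z ↦ log(q(z)/(p(x|z) p(z)))` is an
influence function of the variational inference objective at `q`. -/
theorem variational_inference_influence_function {Z : Type*} [MeasurableSpace Z]
    (lam : Measure Z) [IsFiniteMeasure lam]
    (p l : Z → ℝ) (hpmeas : Measurable p) (hlmeas : Measurable l)
    (cp Cp : ℝ) (hcp : 0 < cp) (hpbd : ∀ᵐ z ∂lam, cp ≤ p z ∧ p z ≤ Cp)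
    (cl Cl : ℝ) (hcl : 0 < cl) (hlbd : ∀ᵐ z ∂lam, cl ≤ l z ∧ l z ≤ Cl)
    (q q' : Z → ℝ) (hqmeas : Measurable q) (hq'meas : Measurable q')
    (cq Cq : ℝ) (hcq : 0 < cq) (hqbd : ∀ᵐ z ∂lam, cq ≤ q z ∧ q z ≤ Cq)
    (cq' Cq' : ℝ) (hcq' : 0 < cq') (hq'bd : ∀ᵐ z ∂lam, cq' ≤ q' z ∧ q' z ≤ Cq')
    (hq1 : ∫ z, q z ∂lam = 1) (hq'1 : ∫ z, q' z ∂lam = 1) :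
    HasDerivWithinAt
      (fun ε : ℝ => klDivergence
        (lam.withDensity fun z => ENNReal.ofReal ((1 - ε) * q z + ε * q' z))
        (lam.withDensity fun z =>
          ENNReal.ofReal (l z * p z / ∫ z', l z' * p z' ∂lam)))
      (∫ z, Real.log (q z / (l z * p z)) * (q' z - q z) ∂lam)
      (Ici (0:ℝ)) 0 := by
  have hlam : lam ≠ 0 := by
    rintro rfl
    simp at hq1
  have : NeZero lam := ⟨hlam⟩
  have hlp : ∀ᵐ z ∂lam, cl * cp ≤ l z * p z ∧ l z * p z ≤ Cl * Cp := by
    filter_upwards [hpbd, hlbd] with z h1 h2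
    exact ⟨mul_le_mul h2.1 h1.1 hcp.le (hcl.le.trans h2.1),
      mul_le_mul h2.2 h1.2 (hcp.le.trans h1.1) ((hcl.le.trans h2.1).trans h2.2)⟩
  have hlpm : Measurable fun z => l z * p z := hlmeas.mul hpmeas
  have hclp : 0 < cl * cp := mul_pos hcl hcp
  have hlpint : Integrable (fun z => l z * p z) lam := by
    refine Integrable.of_bound (C := Cl * Cp) hlpm.aestronglyMeasurable ?_
    filter_upwards [hlp] with z hz
    rw [Real.norm_eq_abs, abs_of_pos (hclp.trans_le hz.1)]
    exact hz.2
  set K : ℝ := ∫ z', l z' * p z' ∂lam with hK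
  have hKpos : 0 < K := by
    have h1 : ∫ _, cl * cp ∂lam ≤ K :=
      integral_mono_ae (integrable_const _) hlpint (hlp.mono fun z hz => hz.1)
    rw [integral_const, smul_eq_mul] at h1
    exact lt_of_lt_of_le (mul_pos (measureReal_univ_pos) hclp) h1
  set M : ℝ := max Cq Cq' with hMdef
  have hqb : ∀ᵐ z ∂lam, cq ≤ q z ∧ q z ≤ M :=
    hqbd.mono fun z hz => ⟨hz.1, hz.2.trans (le_max_left _ _)⟩
  have hq'b : ∀ᵐ z ∂lam, 0 < q' z ∧ q' z ≤ M :=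
    hq'bd.mono fun z hz => ⟨hcq'.trans_le hz.1, hz.2.trans (le_max_right _ _)⟩
  have hM : 0 < M := by
    obtain ⟨z, hz⟩ := hqb.exists
    linarith [hz.1, hz.2]
  have hπm : Measurable fun z => l z * p z / K := hlpm.div_const _
  have hwb : ∀ᵐ z ∂lam, |Real.log (l z * p z / K)| ≤
      |Real.log (cl * cp / K)| + |Real.log (Cl * Cp / K)| := by
    filter_upwards [hlp] with z hz
    exact abs_log_le_of_mem (div_pos hclp hKpos) (div_le_div_of_nonneg_right hz.1 hKpos.le)
      (div_le_div_of_nonneg_right hz.2 hKpos.le)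
  obtain ⟨hInt, hder⟩ := hasDerivAt_integral_mul_log_sub lam q q'
    (fun z => Real.log (l z * p z / K)) hqmeas hq'meas hπm.log hcq hM hqb hq'b hwb
  have hqint : Integrable q lam := not_not.1 fun h => by
    rw [integral_undef h] at hq1; exact zero_ne_one hq1
  have hq'int : Integrable q' lam := not_not.1 fun h => by
    rw [integral_undef h] at hq'1; exact zero_ne_one hq'1
  have hval : ∫ z, (Real.log (q z) - Real.log (l z * p z / K) + 1) * (q' z - q z) ∂lam
      = ∫ z, Real.log (q z / (l z * p z)) * (q' z - q z) ∂lam := by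
    -- The two integrands differ by `(log K + 1) (q' - q)`, which has integral zero.
    have hzero : ∫ z, (Real.log K + 1) * (q' z - q z) ∂lam = 0 := by
      rw [integral_const_mul, integral_sub hq'int hqint, hq1, hq'1, sub_self, mul_zero]
    have hInt' : Integrable (fun z => (Real.log K + 1) * (q' z - q z)) lam :=
      (hq'int.sub hqint).const_mul _
    rw [← sub_zero (∫ z, _ * _ ∂lam), ← hzero, ← integral_sub hInt hInt']
    refine integral_congr_ae ?_
    filter_upwards [hlp, hqb] with z h1 h2
    have hlpz : 0 < l z * p z := hclp.trans_le h1.1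
    rw [Real.log_div hlpz.ne' hKpos.ne', Real.log_div (hcq.trans_le h2.1).ne' hlpz.ne']
    ring
  rw [← hval]
  refine (hder.congr_of_eventuallyEq ?_).hasDerivWithinAt
  have hδ : 0 < cq / (2 * M) := by positivity
  filter_upwards [Metric.ball_mem_nhds (0 : ℝ) hδ] with ε hε
  have hε' : |ε| < cq / (2 * M) := by simpa using hε
  refine klDivergence_withDensity_s8 lam (fun z => (1 - ε) * q z + ε * q' z)
    (fun z => l z * p z / K) (by fun_prop) hπm ?_ ?_
  · filter_upwards [hqb, hq'b] with z h1 h2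
    linarith [(mixture_mem hcq h1.1 h1.2 h2.1 h2.2 hε').1]
  · filter_upwards [hlp] with z hz
    exact div_pos (hclp.trans_le hz.1) hKpos
end

section
/- Consider a finite Markov decision process with state set S, action set A, transition probabilities p(s′|s,a), reward function R : S×A → ℝ, discount factor γ ∈ (0,1), and initial distribution p₀ on S. Let π be a probability distribution on S×A with marginal π(s) = Σ_a π(s,a) > 0 for all s ∈ S, inducing the policy π(a|s) = π(s,a)/π(s). Define J_RL(π) = −Σ_s p₀(s) V^π(s), the negative expected discounted reward under the policy π(a|s) started from p₀. Let π′ be any probability distribution on S×A and set χ = π′ − π; for small ε > 0 the perturbed measure π + εχ has positive marginals and induces the policy (π(s,a) + εχ(s,a))/(π(s) + εχ(s)). Then the one-sided derivative d/dε J_RL(π + εχ)|_{ε=0+} exists and equals −Σ_{s,a} [ (Σ_{t=0}^∞ γ^t p_t^π(s)) / π(s) ] (Q^π(s,a) − V^π(s)) (π′(s,a) − π(s,a)); equivalently, (s,a) ↦ −(Σ_{t=0}^∞ γ^t p_t^π(s)/π(s)) (Q^π(s,a) − V^π(s)) is an influence function of J_RL at π. -/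
/-!
The proof rests on the performance difference identity. Write `d(s) = Σ_t γ^t p_t(s)` for the
discounted occupancy of the base policy `κ`; it solves `d = p₀ + γ d P_κ` (`occupancy_flow`).
If `W` is the value of another policy `κ'` and `Q_W = R + γ P W`, pairing `W` with this flow
equation gives

  `Σ p₀ (W - V) = Σ_s d(s) Σ_a (κ'(a|s) - κ(a|s)) Q_W(s,a)`   (`performance_difference`).

For the perturbed policy, `κ'(a|s) - κ(a|s) = ε (χ(s,a) - κ(a|s) χ(s)) / (π(s) + ε χ(s))`, so
the difference quotient of the objective is an explicit expression in which only `W = W_ε` is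
not elementary. The Bellman operator contracts by `γ`, so `W_ε - V` is bounded by
`(1 - γ)⁻¹ Σ_s |Σ_a (κ'(a|s) - κ(a|s)) Q(s,a)|`, which tends to `0` (`bellman_perturbation`).
Passing to the limit and using `Σ_a κ(a|s) Q(s,a) = V(s)` gives the formula.

The series defining `policyValue` converges because the powers of a stochastic matrix are
bounded, and it satisfies the Bellman equation (`policyValue_bellman`). The performance
difference identity with `κ' = κ` shows that the given `V` yields the objective at `ε = 0`.
-/


open Set

/-- The value function `V^κ` of a policy `κ` in a finite MDP with transitions `P`,
rewards `R`, and discount `γ`: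
`V^κ(s) = Σ_{t=0}^∞ γ^t (P_κ^t r_κ)(s)`, where `P_κ(s,s') = Σ_a κ(a|s) P(s'|s,a)` and
`r_κ(s) = Σ_a κ(a|s) R(s,a)`.  This is the expected discounted reward
`E[Σ_{t=1}^∞ γ^{t-1} r_t | s_0 = s]` under `κ`. -/
noncomputable def policyValue {S A : Type*} [Fintype S] [Fintype A] [DecidableEq S]
    (P : S → A → S → ℝ) (R : S → A → ℝ) (γ : ℝ) (κ : S → A → ℝ) : S → ℝ :=
  fun s => ∑' t : ℕ, γ ^ t *
    (((Matrix.of fun s₁ s₂ : S => ∑ a, κ s₁ a * P s₁ a s₂) ^ t).mulVec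
      (fun s₁ => ∑ a, κ s₁ a * R s₁ a)) s

/-- The reinforcement learning objective as a functional of a joint distribution `ρ` on
`S × A`: `J_RL(ρ) = -Σ_s p₀(s) V^{κ_ρ}(s)`, the negative expected discounted reward of
the policy `κ_ρ(a|s) = ρ(s,a) / Σ_{a'} ρ(s,a')` induced by `ρ`, started from `p₀`. -/
noncomputable def rlObjective {S A : Type*} [Fintype S] [Fintype A] [DecidableEq S]
    (P : S → A → S → ℝ) (R : S → A → ℝ) (γ : ℝ) (p₀ : S → ℝ) (ρ : S → A → ℝ) : ℝ :=
  -∑ s, p₀ s * policyValue P R γ (fun s₁ a => ρ s₁ a / ∑ a', ρ s₁ a') s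


open Filter Topology

/-- Powers of a stochastic matrix do not increase the sup norm. -/
lemma abs_pow_mulVec_le {S : Type*} [Fintype S] [DecidableEq S] (M : Matrix S S ℝ)
    (h0 : ∀ s s', 0 ≤ M s s') (h1 : ∀ s, ∑ s', M s s' = 1) (v : S → ℝ) (C : ℝ)
    (hv : ∀ s, |v s| ≤ C) (t : ℕ) : ∀ s, |((M ^ t).mulVec v) s| ≤ C := by
  induction t with
  | zero => simpa using hv
  | succ t ih =>
    intro s
    rw [pow_succ', ← Matrix.mulVec_mulVec]
    calc |(M.mulVec ((M ^ t).mulVec v)) s|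
        ≤ ∑ s', |M s s' * ((M ^ t).mulVec v) s'| := Finset.abs_sum_le_sum_abs _ _
      _ ≤ ∑ s', M s s' * C := by
          refine Finset.sum_le_sum fun s' _ => ?_
          rw [abs_mul, abs_of_nonneg (h0 s s')]
          exact mul_le_mul_of_nonneg_left (ih s') (h0 s s')
      _ = C := by rw [← Finset.sum_mul, h1, one_mul]

/-- The discounted sum `W = Σ_t γ^t M^t v` solves `W = v + γ M W`. -/
lemma neumann_series_eq {S : Type*} [Fintype S] [DecidableEq S] (M : Matrix S S ℝ)
    (h0 : ∀ s s', 0 ≤ M s s') (h1 : ∀ s, ∑ s', M s s' = 1) (v : S → ℝ) (γ : ℝ)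
    (hγ0 : 0 < γ) (hγ1 : γ < 1) (s : S) :
    ∑' t : ℕ, γ ^ t * ((M ^ t).mulVec v) s
      = v s + γ * ∑ s', M s s' * ∑' t : ℕ, γ ^ t * ((M ^ t).mulVec v) s' := by
  have hC : ∀ s, |v s| ≤ ∑ s', |v s'| := fun s =>
    Finset.single_le_sum (f := fun s => |v s|) (fun _ _ => abs_nonneg _) (Finset.mem_univ s)
  have hsum : ∀ s, Summable fun t : ℕ => γ ^ t * ((M ^ t).mulVec v) s := by
    intro s
    refine Summable.of_norm_bounded
      ((summable_geometric_of_lt_one hγ0.le hγ1).mul_right (∑ s', |v s'|)) fun t => ?_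
    rw [Real.norm_eq_abs, abs_mul, abs_of_nonneg (pow_nonneg hγ0.le t)]
    exact mul_le_mul_of_nonneg_left (abs_pow_mulVec_le M h0 h1 v _ hC t s)
      (pow_nonneg hγ0.le t)
  rw [(hsum s).tsum_eq_zero_add]
  congr 1
  · simp
  · have hM : ∀ s', M s s' * ∑' t : ℕ, γ ^ t * ((M ^ t).mulVec v) s'
        = ∑' t : ℕ, M s s' * (γ ^ t * ((M ^ t).mulVec v) s') := fun s' => tsum_mul_left.symm
    simp_rw [hM]
    rw [← Summable.tsum_finsetSum fun s' _ => (hsum s').mul_left _, ← tsum_mul_left]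
    refine tsum_congr fun t => ?_
    rw [pow_succ' M, ← Matrix.mulVec_mulVec, Matrix.mulVec, dotProduct, Finset.mul_sum,
      Finset.mul_sum]
    refine Finset.sum_congr rfl fun s' _ => ?_
    ring

/-- `policyValue` of a genuine policy satisfies the Bellman equation. -/
lemma policyValue_bellman {S A : Type*} [Fintype S] [Fintype A] [DecidableEq S]
    (P : S → A → S → ℝ) (hP0 : ∀ s a s', 0 ≤ P s a s') (hP1 : ∀ s a, ∑ s', P s a s' = 1)
    (R : S → A → ℝ) (γ : ℝ) (hγ0 : 0 < γ) (hγ1 : γ < 1)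
    (κ : S → A → ℝ) (hκ0 : ∀ s a, 0 ≤ κ s a) (hκ1 : ∀ s, ∑ a, κ s a = 1) (s : S) :
    policyValue P R γ κ s
      = ∑ a, κ s a * (R s a + γ * ∑ s', P s a s' * policyValue P R γ κ s') := by
  have h := neumann_series_eq (Matrix.of fun s₁ s₂ : S => ∑ a, κ s₁ a * P s₁ a s₂)
    (fun s s' => Finset.sum_nonneg fun a _ => mul_nonneg (hκ0 s a) (hP0 s a s'))
    (fun s => by
      simp only [Matrix.of_apply]
      rw [Finset.sum_comm]
      simp_rw [← Finset.mul_sum, hP1, mul_one, hκ1])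
    (fun s₁ => ∑ a, κ s₁ a * R s₁ a) γ hγ0 hγ1 s
  refine h.trans ?_
  simp only [mul_add, Finset.sum_add_distrib, Matrix.of_apply]
  congr 1
  simp only [Finset.mul_sum, Finset.sum_mul]
  rw [Finset.sum_comm]
  refine Finset.sum_congr rfl fun a _ => Finset.sum_congr rfl fun s' _ => ?_
  simp only [policyValue]
  ring

/-- Contraction estimate: if `V` and `W` are values of `κ` and `κ'`, their distance is
controlled by how much `κ' - κ` changes the one-step average of `Q_V = R + γ P V`. For
`κ = κ'` this is uniqueness of the solution of the Bellman equation. -/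
lemma bellman_perturbation {S A : Type*} [Fintype S] [Fintype A] [Nonempty S]
    (P : S → A → S → ℝ) (hP0 : ∀ s a s', 0 ≤ P s a s') (hP1 : ∀ s a, ∑ s', P s a s' = 1)
    (R : S → A → ℝ) (γ : ℝ) (hγ0 : 0 < γ) (hγ1 : γ < 1)
    (κ κ' : S → A → ℝ) (hκ0 : ∀ s a, 0 ≤ κ' s a) (hκ1 : ∀ s, ∑ a, κ' s a = 1)
    (V W : S → ℝ)
    (hV : ∀ s, V s = ∑ a, κ s a * (R s a + γ * ∑ s', P s a s' * V s'))
    (hW : ∀ s, W s = ∑ a, κ' s a * (R s a + γ * ∑ s', P s a s' * W s')) (s : S) :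
    |W s - V s| ≤ (1 - γ)⁻¹ *
      ∑ s, |∑ a, (κ' s a - κ s a) * (R s a + γ * ∑ s', P s a s' * V s')| := by
  obtain ⟨m, hm⟩ := Finite.exists_max fun s => |W s - V s|
  set b : S → ℝ := fun s => ∑ a, (κ' s a - κ s a) * (R s a + γ * ∑ s', P s a s' * V s')
    with hb
  have hrec : W m - V m = b m + ∑ a, κ' m a * (γ * ∑ s', P m a s' * (W s' - V s')) := by
    rw [hW m, hV m, hb]
    simp only
    rw [← Finset.sum_sub_distrib, ← Finset.sum_add_distrib]
    refine Finset.sum_congr rfl fun a _ => ?_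
    simp only [mul_sub, Finset.sum_sub_distrib]
    ring
  have hbm : |b m| ≤ ∑ s, |b s| :=
    Finset.single_le_sum (f := fun s => |b s|) (fun _ _ => abs_nonneg _) (Finset.mem_univ m)
  have hin : ∀ a, |∑ s', P m a s' * (W s' - V s')| ≤ |W m - V m| := by
    intro a
    calc |∑ s', P m a s' * (W s' - V s')|
        ≤ ∑ s', |P m a s' * (W s' - V s')| := Finset.abs_sum_le_sum_abs _ _
      _ ≤ ∑ s', P m a s' * |W m - V m| := by
          refine Finset.sum_le_sum fun s' _ => ?_
          rw [abs_mul, abs_of_nonneg (hP0 m a s')]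
          exact mul_le_mul_of_nonneg_left (hm s') (hP0 m a s')
      _ = |W m - V m| := by rw [← Finset.sum_mul, hP1, one_mul]
  have hout : |∑ a, κ' m a * (γ * ∑ s', P m a s' * (W s' - V s'))| ≤ γ * |W m - V m| := by
    calc |∑ a, κ' m a * (γ * ∑ s', P m a s' * (W s' - V s'))|
        ≤ ∑ a, |κ' m a * (γ * ∑ s', P m a s' * (W s' - V s'))| :=
          Finset.abs_sum_le_sum_abs _ _
      _ ≤ ∑ a, κ' m a * (γ * |W m - V m|) := by
          refine Finset.sum_le_sum fun a _ => ?_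
          rw [abs_mul, abs_mul, abs_of_nonneg (hκ0 m a), abs_of_pos hγ0]
          exact mul_le_mul_of_nonneg_left (mul_le_mul_of_nonneg_left (hin a) hγ0.le) (hκ0 m a)
      _ = γ * |W m - V m| := by rw [← Finset.sum_mul, hκ1, one_mul]
  have htri : |W m - V m| ≤ |b m| + γ * |W m - V m| := by
    calc |W m - V m| = |b m + ∑ a, κ' m a * (γ * ∑ s', P m a s' * (W s' - V s'))| := by
          rw [← hrec]
      _ ≤ _ := (abs_add_le _ _).trans (by linarith)
  refine (hm s).trans ?_
  rw [inv_mul_eq_div, le_div_iff₀ (by linarith)]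
  nlinarith

/-- The discounted occupancy measure `d = Σ_t γ^t p_t` satisfies the flow equation
`d = p₀ + γ d P_κ`. -/
lemma occupancy_flow {S A : Type*} [Fintype S] [Fintype A]
    (P : S → A → S → ℝ) (hP0 : ∀ s a s', 0 ≤ P s a s') (hP1 : ∀ s a, ∑ s', P s a s' = 1)
    (γ : ℝ) (hγ0 : 0 < γ) (hγ1 : γ < 1)
    (κ : S → A → ℝ) (hκ0 : ∀ s a, 0 ≤ κ s a) (hκ1 : ∀ s, ∑ a, κ s a = 1)
    (pt : ℕ → S → ℝ) (h0 : ∀ s, 0 ≤ pt 0 s) (h1 : ∑ s, pt 0 s = 1)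
    (hsucc : ∀ t s', pt (t + 1) s' = ∑ s, ∑ a, pt t s * κ s a * P s a s') (s' : S) :
    ∑' t : ℕ, γ ^ t * pt t s'
      = pt 0 s' + γ * ∑ s, ∑ a, (∑' t : ℕ, γ ^ t * pt t s) * κ s a * P s a s' := by
  have hpos : ∀ t s, 0 ≤ pt t s := by
    intro t
    induction t with
    | zero => exact h0
    | succ t ih =>
      intro s
      rw [hsucc]
      exact Finset.sum_nonneg fun s₁ _ => Finset.sum_nonneg fun a _ =>
        mul_nonneg (mul_nonneg (ih s₁) (hκ0 s₁ a)) (hP0 _ _ _)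
  have hone : ∀ t, ∑ s, pt t s = 1 := by
    intro t
    induction t with
    | zero => exact h1
    | succ t ih =>
      simp_rw [hsucc]
      rw [Finset.sum_comm, ← ih]
      refine Finset.sum_congr rfl fun s _ => ?_
      rw [Finset.sum_comm]
      simp_rw [← Finset.mul_sum, hP1, mul_one, ← Finset.mul_sum, hκ1, mul_one]
  have hsum : ∀ s, Summable fun t : ℕ => γ ^ t * pt t s := by
    intro s
    refine Summable.of_nonneg_of_le (fun t => mul_nonneg (pow_nonneg hγ0.le t) (hpos t s))
      (fun t => ?_) (summable_geometric_of_lt_one hγ0.le hγ1)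
    refine mul_le_of_le_one_right (pow_nonneg hγ0.le t) ?_
    rw [← hone t]
    exact Finset.single_le_sum (fun s _ => hpos t s) (Finset.mem_univ s)
  rw [(hsum s').tsum_eq_zero_add]
  congr 1
  · simp
  · simp_rw [← tsum_mul_right]
    have hs : ∀ s a, Summable fun t : ℕ => γ ^ t * pt t s * κ s a * P s a s' := fun s a =>
      ((hsum s).mul_right _).mul_right _
    have hin : ∀ s, ∑ a, ∑' t : ℕ, γ ^ t * pt t s * κ s a * P s a s'
        = ∑' t : ℕ, ∑ a, γ ^ t * pt t s * κ s a * P s a s' := fun s =>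
      (Summable.tsum_finsetSum fun a _ => hs s a).symm
    simp_rw [hin]
    rw [← Summable.tsum_finsetSum fun s _ => summable_sum fun a _ => hs s a, ← tsum_mul_left]
    refine tsum_congr fun t => ?_
    rw [hsucc]
    simp only [Finset.mul_sum]
    refine Finset.sum_congr rfl fun s _ => Finset.sum_congr rfl fun a _ => ?_
    ring

/-- Performance difference identity, with the occupancy `d` of the base policy `κ` and the
state-action values of the other policy `κ'`. -/
lemma performance_difference {S A : Type*} [Fintype S] [Fintype A]
    (P : S → A → S → ℝ) (R : S → A → ℝ) (γ : ℝ) (p₀ d : S → ℝ) (κ κ' : S → A → ℝ)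
    (hd : ∀ s', d s' = p₀ s' + γ * ∑ s, ∑ a, d s * κ s a * P s a s')
    (V W : S → ℝ)
    (hV : ∀ s, V s = ∑ a, κ s a * (R s a + γ * ∑ s', P s a s' * V s'))
    (hW : ∀ s, W s = ∑ a, κ' s a * (R s a + γ * ∑ s', P s a s' * W s')) :
    ∑ s, p₀ s * W s - ∑ s, p₀ s * V s
      = ∑ s, d s * ∑ a, (κ' s a - κ s a) * (R s a + γ * ∑ s', P s a s' * W s') := by
  have key : ∀ U : S → ℝ, ∑ s, p₀ s * U s
      = ∑ s, d s * U s - ∑ s, d s * ∑ a, κ s a * (γ * ∑ s', P s a s' * U s') := by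
    intro U
    have h1 : ∀ s, p₀ s * U s = d s * U s
        - (γ * ∑ s₁, ∑ a, d s₁ * κ s₁ a * P s₁ a s) * U s := by
      intro s
      linear_combination (-U s) * hd s
    simp_rw [h1, Finset.sum_sub_distrib]
    congr 1
    simp only [Finset.mul_sum, Finset.sum_mul]
    rw [Finset.sum_comm]
    refine Finset.sum_congr rfl fun s _ => ?_
    rw [Finset.sum_comm]
    refine Finset.sum_congr rfl fun a _ => Finset.sum_congr rfl fun s' _ => ?_
    ring
  rw [key W, key V, ← Finset.sum_sub_distrib, ← Finset.sum_sub_distrib,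
    ← Finset.sum_sub_distrib]
  refine Finset.sum_congr rfl fun s _ => ?_
  have hV' : V s - ∑ a, κ s a * (γ * ∑ s', P s a s' * V s') = ∑ a, κ s a * R s a := by
    conv_lhs => rw [hV s]
    rw [← Finset.sum_sub_distrib]
    exact Finset.sum_congr rfl fun a _ => by ring
  have hW' : W s - ∑ a, κ s a * (γ * ∑ s', P s a s' * W s') - ∑ a, κ s a * R s a
      = ∑ a, (κ' s a - κ s a) * (R s a + γ * ∑ s', P s a s' * W s') := by
    conv_lhs => enter [1, 1]; rw [hW s]
    rw [← Finset.sum_sub_distrib, ← Finset.sum_sub_distrib]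
    exact Finset.sum_congr rfl fun a _ => by ring
  linear_combination (-d s) * hV' + d s * hW'

/-- **The influence function of the reinforcement learning objective**
(Proposition 10 of Chu–Blanchet–Glynn).  In a finite MDP, let `pj` be a joint
distribution on `S × A` with everywhere-positive state marginal, inducing the policy
`κ(a|s) = pj(s,a)/pj(s)`; let `Q, V` be its state-action value and value functions and
`p_t` its state marginals after `t` steps.  Let `pj'` be any joint distribution and
`χ = pj' - pj`.  Then `ε ↦ J_RL(pj + ε χ)` has one-sided derivative at `ε = 0⁺` equal to
`-Σ_{s,a} [(Σ_t γ^t p_t(s)) / pj(s)] (Q(s,a) - V(s)) (pj'(s,a) - pj(s,a))`; i.e.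
`(s,a) ↦ -(Σ_t γ^t p_t(s) / pj(s)) (Q(s,a) - V(s))` is an influence function of `J_RL`
at `pj`. -/
theorem rl_influence_function {S A : Type*} [Fintype S] [Fintype A] [DecidableEq S]
    [Nonempty S] [Nonempty A]
    (P : S → A → S → ℝ) (hP0 : ∀ s a s', 0 ≤ P s a s') (hP1 : ∀ s a, ∑ s', P s a s' = 1)
    (R : S → A → ℝ) (γ : ℝ) (hγ0 : 0 < γ) (hγ1 : γ < 1)
    (p₀ : S → ℝ) (hp₀0 : ∀ s, 0 ≤ p₀ s) (hp₀1 : ∑ s, p₀ s = 1)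
    (pj pj' : S → A → ℝ)
    (hpj0 : ∀ s a, 0 ≤ pj s a) (hpj1 : ∑ s, ∑ a, pj s a = 1)
    (hmarg : ∀ s, 0 < ∑ a, pj s a)
    (hpj'0 : ∀ s a, 0 ≤ pj' s a) (hpj'1 : ∑ s, ∑ a, pj' s a = 1)
    (Q : S → A → ℝ) (V : S → ℝ)
    (hQ : ∀ s a, Q s a = R s a + γ * ∑ s', P s a s' * V s')
    (hV : ∀ s, V s = ∑ a, (pj s a / ∑ a', pj s a') * Q s a)
    (pt : ℕ → S → ℝ)
    (hpt0 : pt 0 = p₀)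
    (hptsucc : ∀ t s', pt (t + 1) s'
      = ∑ s, ∑ a, pt t s * (pj s a / ∑ a', pj s a') * P s a s') :
    HasDerivWithinAt
      (fun ε : ℝ => rlObjective P R γ p₀ (fun s a => pj s a + ε * (pj' s a - pj s a)))
      (-∑ s, ∑ a, ((∑' t : ℕ, γ ^ t * pt t s) / ∑ a', pj s a') * (Q s a - V s)
          * (pj' s a - pj s a))
      (Ici (0:ℝ)) 0 := by
  set κ : S → A → ℝ := fun s a => pj s a / ∑ a', pj s a' with hκ
  have hκ0 : ∀ s a, 0 ≤ κ s a := fun s a => div_nonneg (hpj0 s a) (hmarg s).le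
  have hκ1 : ∀ s, ∑ a, κ s a = 1 := fun s => by
    simp only [hκ]
    rw [← Finset.sum_div, div_self (hmarg s).ne']
  set d : S → ℝ := fun s => ∑' t : ℕ, γ ^ t * pt t s with hd
  have hflow : ∀ s', d s' = p₀ s' + γ * ∑ s, ∑ a, d s * κ s a * P s a s' := by
    intro s'
    have h := occupancy_flow P hP0 hP1 γ hγ0 hγ1 κ hκ0 hκ1 pt (by rwa [hpt0])
      (by rwa [hpt0]) hptsucc s'
    rwa [hpt0] at h
  have hVb : ∀ s, V s = ∑ a, κ s a * (R s a + γ * ∑ s', P s a s' * V s') := fun s => by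
    rw [hV s]
    simp_rw [hQ]
    rfl
  -- the marginal of the perturbation direction, the perturbed marginal, policy and value
  let c : S → ℝ := fun s => ∑ a, (pj' s a - pj s a)
  let m : ℝ → S → ℝ := fun ε s => ∑ a', pj s a' + ε * c s
  let κ' : ℝ → S → A → ℝ := fun ε s a => (pj s a + ε * (pj' s a - pj s a)) / m ε s
  let W : ℝ → S → ℝ := fun ε => policyValue P R γ (κ' ε)
  have hobj : ∀ ε, rlObjective P R γ p₀ (fun s a => pj s a + ε * (pj' s a - pj s a))
      = -∑ s, p₀ s * W ε s := by
    intro ε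
    simp only [rlObjective, W, κ', m, c, Finset.sum_add_distrib, Finset.mul_sum]
  have hm_pos : ∀ ε, 0 ≤ ε → ε < 1 → ∀ s, 0 < m ε s := by
    intro ε h0 h1 s
    have hs : 0 ≤ ∑ a, pj' s a := Finset.sum_nonneg fun a _ => hpj'0 s a
    have : m ε s = (1 - ε) * ∑ a, pj s a + ε * ∑ a, pj' s a := by
      simp only [m, c, Finset.sum_sub_distrib]; ring
    rw [this]
    have := mul_pos (sub_pos.2 h1) (hmarg s)
    have := mul_nonneg h0 hs
    linarith
  have hκ'0 : ∀ ε, 0 ≤ ε → ε < 1 → ∀ s a, 0 ≤ κ' ε s a := by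
    intro ε h0 h1 s a
    refine div_nonneg ?_ (hm_pos ε h0 h1 s).le
    have := mul_nonneg (sub_pos.2 h1).le (hpj0 s a)
    have := mul_nonneg h0 (hpj'0 s a)
    linarith
  have hκ'1 : ∀ ε, 0 ≤ ε → ε < 1 → ∀ s, ∑ a, κ' ε s a = 1 := by
    intro ε h0 h1 s
    simp only [κ']
    rw [← Finset.sum_div, Finset.sum_add_distrib, ← Finset.mul_sum]
    exact div_self (hm_pos ε h0 h1 s).ne'
  have hWb : ∀ ε, 0 ≤ ε → ε < 1 → ∀ s,
      W ε s = ∑ a, κ' ε s a * (R s a + γ * ∑ s', P s a s' * W ε s') := fun ε h0 h1 s =>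
    policyValue_bellman P hP0 hP1 R γ hγ0 hγ1 (κ' ε) (hκ'0 ε h0 h1) (hκ'1 ε h0 h1) s
  have hκ'κ : κ' 0 = κ := by
    funext s a
    simp [κ', m, hκ]
  have hpd : ∀ ε, 0 ≤ ε → ε < 1 → ∑ s, p₀ s * W ε s - ∑ s, p₀ s * V s
      = ∑ s, d s * ∑ a, (κ' ε s a - κ s a) * (R s a + γ * ∑ s', P s a s' * W ε s') :=
    fun ε h0 h1 => performance_difference P R γ p₀ d κ (κ' ε) hflow V (W ε) hVb (hWb ε h0 h1)
  have hdiff : ∀ ε, 0 ≤ ε → ε < 1 → ∀ s a,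
      κ' ε s a - κ s a = ε * ((pj' s a - pj s a - κ s a * c s) / m ε s) := by
    intro ε h0 h1 s a
    have h2 := (hm_pos ε h0 h1 s).ne'
    have h3 := (hmarg s).ne'
    have h4 : pj s a = κ s a * ∑ a', pj s a' := by simp only [hκ]; field_simp
    have h5 : m ε s = ∑ a', pj s a' + ε * c s := rfl
    simp only [κ']
    rw [mul_div_assoc', sub_eq_iff_eq_add, div_eq_iff h2, add_mul, div_mul_cancel₀ _ h2, h5]
    linear_combination h4
  have hm_tend : ∀ s, Tendsto (fun ε => m ε s) (𝓝[>] 0) (𝓝 (∑ a', pj s a')) := by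
    intro s
    have : Continuous fun ε => m ε s := by fun_prop
    have h := (this.tendsto 0).mono_left (nhdsWithin_le_nhds (s := Ioi (0:ℝ)))
    simpa [m] using h
  have hκ_tend : ∀ s a, Tendsto (fun ε => κ' ε s a) (𝓝[>] 0) (𝓝 (κ s a)) := by
    intro s a
    refine Tendsto.div ?_ (hm_tend s) (hmarg s).ne'
    have : Continuous fun ε : ℝ => pj s a + ε * (pj' s a - pj s a) := by fun_prop
    have h := (this.tendsto 0).mono_left (nhdsWithin_le_nhds (s := Ioi (0:ℝ)))
    simpa using h
  have hsmall : ∀ᶠ ε : ℝ in 𝓝[>] 0, 0 < ε ∧ ε < 1 := Ioo_mem_nhdsGT one_pos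
  have hW_tend : ∀ s, Tendsto (fun ε => W ε s) (𝓝[>] 0) (𝓝 (V s)) := by
    intro s
    rw [tendsto_iff_norm_sub_tendsto_zero]
    have hbound : Tendsto (fun ε => (1 - γ)⁻¹ * ∑ s, |∑ a, (κ' ε s a - κ s a) *
        (R s a + γ * ∑ s', P s a s' * V s')|) (𝓝[>] 0) (𝓝 ((1 - γ)⁻¹ * ∑ s, |∑ a,
        (κ s a - κ s a) * (R s a + γ * ∑ s', P s a s' * V s')|)) :=
      (tendsto_finsetSum _ fun s _ => (tendsto_finsetSum _ fun a _ =>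
        ((hκ_tend s a).sub_const _).mul_const _).abs).const_mul _
    simp only [sub_self, zero_mul, Finset.sum_const_zero, abs_zero, mul_zero] at hbound
    refine squeeze_zero' (Eventually.of_forall fun _ => norm_nonneg _) ?_ hbound
    filter_upwards [hsmall] with ε hε
    exact bellman_perturbation P hP0 hP1 R γ hγ0 hγ1 κ (κ' ε) (hκ'0 ε hε.1.le hε.2)
      (hκ'1 ε hε.1.le hε.2) V (W ε) hVb (hWb ε hε.1.le hε.2) s
  have hg_tend : Tendsto (fun ε => -∑ s, d s * ∑ a,
        (pj' s a - pj s a - κ s a * c s) / m ε s * (R s a + γ * ∑ s', P s a s' * W ε s'))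
      (𝓝[>] 0) (𝓝 (-∑ s, d s * ∑ a, (pj' s a - pj s a - κ s a * c s) / (∑ a', pj s a') *
        (R s a + γ * ∑ s', P s a s' * V s'))) :=
    (tendsto_finsetSum _ fun s _ => (tendsto_finsetSum _ fun a _ =>
      (tendsto_const_nhds.div (hm_tend s) (hmarg s).ne').mul
        (((tendsto_finsetSum _ fun s' _ => (hW_tend s').const_mul _).const_mul _).const_add _)
      ).const_mul _).neg
  -- subtracting `κ(a|s) χ(s)` from the direction centres `Q` at its `κ`-average `V`
  have hval : (∑ s, d s * ∑ a, (pj' s a - pj s a - κ s a * c s) / (∑ a', pj s a') *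
        (R s a + γ * ∑ s', P s a s' * V s'))
      = ∑ s, ∑ a, (d s / ∑ a', pj s a') * (Q s a - V s) * (pj' s a - pj s a) := by
    refine Finset.sum_congr rfl fun s _ => ?_
    have hVs : ∑ a, κ s a * Q s a = V s := (hV s).symm
    have e1 : ∑ a, (pj' s a - pj s a - κ s a * c s) * Q s a
        = ∑ a, (Q s a - V s) * (pj' s a - pj s a) := by
      have e2 : ∑ a, (pj' s a - pj s a - κ s a * c s) * Q s a
          = ∑ a, (pj' s a - pj s a) * Q s a - c s * ∑ a, κ s a * Q s a := by
        rw [Finset.mul_sum, ← Finset.sum_sub_distrib]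
        exact Finset.sum_congr rfl fun a _ => by ring
      rw [e2, hVs, mul_comm (c s), Finset.mul_sum, ← Finset.sum_sub_distrib]
      exact Finset.sum_congr rfl fun a _ => by ring
    simp_rw [← hQ, mul_assoc]
    rw [← Finset.mul_sum, ← e1, Finset.mul_sum, Finset.mul_sum]
    exact Finset.sum_congr rfl fun a _ => by ring
  rw [← hval, hasDerivWithinAt_iff_tendsto_slope, Ici_sdiff_left]
  refine hg_tend.congr' ?_
  filter_upwards [hsmall] with ε hε
  -- at `ε = 0` both policies agree, so the performance difference vanishes
  have h0 : ∑ s, p₀ s * W 0 s = ∑ s, p₀ s * V s := by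
    have h := hpd 0 le_rfl one_pos
    simpa [hκ'κ, sub_eq_zero] using h
  rw [slope_def_field, hobj, hobj, h0, sub_zero, eq_div_iff hε.1.ne', neg_sub_neg,
    ← neg_sub (∑ s, p₀ s * W ε s), hpd ε hε.1.le hε.2, neg_mul, neg_inj, Finset.sum_mul]
  refine Finset.sum_congr rfl fun s _ => ?_
  rw [mul_assoc, Finset.sum_mul]
  congr 1
  refine Finset.sum_congr rfl fun a _ => ?_
  rw [hdiff ε hε.1.le hε.2]
  ring
end
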